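/- arXiv:2506.01660 — 2 statements merged into one kernel-verified Lean document; each statement's English description precedes it below -/
import Mathlib

section
/- For every a ∈ (0, π/2) and all x, y ∈ S² with x ≠ y, letting B(x,a) and B(y,a) be the spherical caps of geodesic radius a centered at x and y, one has (1/σ(B(x,a))²)·∫_{B(x,a)}∫_{B(y,a)} log(1/|u − v|) dσ(u)dσ(v) ≤ log(1/|x − y|) + 1 + 2·cot²(a/2)·log cos(a/2). -/
open MeasureTheory Real Filter Set

noncomputable section

/-- Euclidean 3-space. -/
abbrev E3 : Type := EuclideanSpace ℝ (Fin 3)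

/-- The unit sphere `S²` = {x ∈ ℝ³ : |x| = 1}. -/
abbrev S2 : Type := Metric.sphere (0 : E3) 1

/-- Surface measure on `S²`. -/
noncomputable def surf : Measure S2 := (volume : Measure E3).toSphere

/-- The normalized surface (uniform probability) measure `σ` on `S²`. -/
noncomputable def sigma2 : Measure S2 := (surf Set.univ)⁻¹ • surf

instance : IsFiniteMeasure sigma2 := by
  constructor
  rw [sigma2]
  simp only [Measure.smul_apply, smul_eq_mul]
  exact lt_of_le_of_lt (ENNReal.inv_mul_le_one _) ENNReal.one_lt_top

/-- The geodesic (great-circle) distance on `S²`. -/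
noncomputable def dg (x y : S2) : ℝ := Real.arccos (inner (𝕜 := ℝ) (x : E3) (y : E3))

/-- The spherical cap `B(x,a) = {y ∈ S² : d_g(x,y) ≤ a}`. -/
def cap (x : S2) (a : ℝ) : Set S2 := {y | dg x y ≤ a}


abbrev WW : Type := WithLp 2 (ℝ × ℂ)

lemma exists_iso (x : S2) : ∃ Φ : E3 ≃ₗᵢ[ℝ] WW, Φ x = WithLp.toLp 2 ((1:ℝ), (0:ℂ)) := by
  have h1 : ∃ b : OrthonormalBasis (Fin 3) ℝ E3, b 0 = x := by
    have hx : ‖(x : E3)‖ = 1 := by simp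
    have := Orthonormal.exists_orthonormalBasis_extension_of_card_eq (𝕜 := ℝ) (E := E3)
      (ι := Fin 3) (by simp) (v := fun _ => (x : E3)) (s := {0}) (by
        constructor
        · intro i; simp
        · intro i j hij; exact absurd (Subsingleton.elim i j) hij)
    obtain ⟨b, hb⟩ := this
    exact ⟨b, hb 0 (by simp)⟩
  have h2 : ∃ b : OrthonormalBasis (Fin 3) ℝ WW, b 0 = WithLp.toLp 2 ((1:ℝ), (0:ℂ)) := by
    have := Orthonormal.exists_orthonormalBasis_extension_of_card_eq (𝕜 := ℝ) (E := WW)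
      (ι := Fin 3) (by
        rw [(WithLp.linearEquiv 2 ℝ (ℝ × ℂ)).finrank_eq]
        simp) (v := fun _ => (WithLp.toLp 2 ((1:ℝ), (0:ℂ)) : WW)) (s := {0}) (by
        constructor
        · intro i; simp
        · intro i j hij; exact absurd (Subsingleton.elim i j) hij)
    obtain ⟨b, hb⟩ := this
    exact ⟨b, hb 0 (by simp)⟩
  obtain ⟨b, hb⟩ := h1
  obtain ⟨b', hb'⟩ := h2
  refine ⟨b.equiv b' (Equiv.refl _), ?_⟩
  rw [← hb, ← hb']
  simp

def rotW (t : ℝ) : WW ≃ₗᵢ[ℝ] WW :=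
  LinearIsometryEquiv.withLpProdCongr 2 (LinearIsometryEquiv.refl ℝ ℝ) (rotation (Circle.exp t))

/-- action on sphere -/
def sphMap (f : E3 ≃ₗᵢ[ℝ] E3) (u : S2) : S2 := ⟨f u, by simp⟩

lemma sphMap_continuous (f : E3 ≃ₗᵢ[ℝ] E3) : Continuous (sphMap f) := by
  unfold sphMap; fun_prop

open scoped Pointwise in
lemma surf_map (f : E3 ≃ₗᵢ[ℝ] E3) : MeasurePreserving (sphMap f) surf surf := by
  refine ⟨(sphMap_continuous f).measurable, ?_⟩
  ext s hs
  rw [Measure.map_apply (sphMap_continuous f).measurable hs, surf,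
    Measure.toSphere_apply' _ hs, Measure.toSphere_apply' _ ((sphMap_continuous f).measurable hs)]
  congr 1
  rw [← f.measurePreserving.measure_preimage_emb f.toMeasurableEquiv.measurableEmbedding
    (Ioo (0:ℝ) 1 • (Set.image Subtype.val s))]
  congr 1
  ext p
  simp only [Set.mem_smul, Set.mem_preimage]
  constructor
  · rintro ⟨r, hr, q, ⟨u, hu, rfl⟩, rfl⟩
    exact ⟨r, hr, _, ⟨_, hu, rfl⟩, by simp [sphMap]⟩
  · rintro ⟨r, hr, q, ⟨u, hu, rfl⟩, h⟩
    refine ⟨r, hr, _, ⟨sphMap f.symm u, ?_, rfl⟩, ?_⟩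
    · have : sphMap f (sphMap f.symm u) = u := by ext1; simp [sphMap]
      simpa [this] using hu
    · apply f.injective
      simp [sphMap]
      exact h

lemma sigma_map (f : E3 ≃ₗᵢ[ℝ] E3) : MeasurePreserving (sphMap f) sigma2 sigma2 := by
  rw [sigma2]
  exact (surf_map f).smul_measure _

lemma slice_vol (s : ℝ) (hs0 : 0 < s) (hs1 : s ≤ 1) (z : ℝ) (hz : z ≠ 0) :
    volume {w : ℂ | z^2 + ‖w‖^2 < 1 ∧ s * √(z^2+‖w‖^2) ≤ z} =
      (Ioc 0 1).indicator (fun z => ENNReal.ofReal (π * min (1 - z^2) (z^2*((s^2)⁻¹ - 1)))) z := by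
  by_cases hz0 : z ∈ Ioc (0:ℝ) 1
  · rw [Set.indicator_of_mem hz0]
    obtain ⟨h0, h1⟩ := hz0
    have hs2 : 1 ≤ (s^2)⁻¹ := by
      apply (one_le_inv₀ (by positivity)).2; nlinarith
    set m := min (1 - z^2) (z^2*((s^2)⁻¹ - 1)) with hm
    have hm0 : 0 ≤ m := by
      apply le_min
      · nlinarith
      · apply mul_nonneg (by positivity); linarith
    have key : ∀ w : ℂ, (s * √(z^2+‖w‖^2) ≤ z ↔ ‖w‖^2 ≤ z^2*((s^2)⁻¹ - 1)) := by
      intro w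
      rw [← sq_le_sq₀ (by positivity) h0.le, mul_pow, Real.sq_sqrt (by positivity),
        ← le_div_iff₀' (by positivity), div_eq_mul_inv]
      constructor <;> intro h <;> linarith
    have e1 : Metric.ball (0:ℂ) (√m) ⊆ {w : ℂ | z^2 + ‖w‖^2 < 1 ∧ s * √(z^2+‖w‖^2) ≤ z} := by
      intro w hw
      rw [mem_ball_zero_iff, Real.lt_sqrt (norm_nonneg _)] at hw
      refine ⟨?_, (key w).2 ?_⟩
      · have := min_le_left (1 - z^2) (z^2*((s^2)⁻¹ - 1)); linarith
      · have := min_le_right (1 - z^2) (z^2*((s^2)⁻¹ - 1)); linarith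
    have e2 : {w : ℂ | z^2 + ‖w‖^2 < 1 ∧ s * √(z^2+‖w‖^2) ≤ z} ⊆ Metric.closedBall (0:ℂ) (√m) := by
      rintro w ⟨hw1, hw2⟩
      rw [mem_closedBall_zero_iff]
      apply Real.le_sqrt_of_sq_le
      exact le_min (by linarith) ((key w).1 hw2)
    have v : ENNReal.ofReal (√m) ^ 2 * NNReal.pi = ENNReal.ofReal (π * m) := by
      rw [← ENNReal.ofReal_pow (by positivity), Real.sq_sqrt hm0, mul_comm,
        ENNReal.ofReal_mul Real.pi_pos.le]
      congr 1
      rw [← NNReal.coe_real_pi, ENNReal.ofReal_coe_nnreal]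
    apply le_antisymm
    · refine (measure_mono e2).trans ?_
      rw [Complex.volume_closedBall, v]
    · refine le_trans ?_ (measure_mono e1)
      rw [Complex.volume_ball, v]
  · rw [Set.indicator_of_notMem hz0]
    convert measure_empty (μ := (volume : Measure ℂ))
    rw [Set.eq_empty_iff_forall_notMem]
    rintro w ⟨h1, h2⟩
    apply hz0
    have : 0 ≤ s * √(z^2+‖w‖^2) := by positivity
    exact ⟨lt_of_le_of_ne (this.trans h2) hz.symm, by nlinarith [sq_nonneg ‖w‖]⟩

lemma int_min (s : ℝ) (hs0 : 0 < s) (hs1 : s ≤ 1) :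
    ∫ z in (0:ℝ)..1, π * min (1 - z^2) (z^2*((s^2)⁻¹ - 1)) = 2*π/3*(1-s) := by
  have hc : Continuous fun z : ℝ => π * min (1 - z^2) (z^2*((s^2)⁻¹ - 1)) := by fun_prop
  rw [← intervalIntegral.integral_add_adjacent_intervals (hc.intervalIntegrable 0 s)
    (hc.intervalIntegrable s 1)]
  have e1 : ∫ z in (0:ℝ)..s, π * min (1 - z^2) (z^2*((s^2)⁻¹ - 1)) =
      ∫ z in (0:ℝ)..s, z^2 * (π*((s^2)⁻¹ - 1)) := by
    apply intervalIntegral.integral_congr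
    intro z hz
    rw [uIcc_of_le hs0.le] at hz
    have : z^2 * (s^2)⁻¹ ≤ 1 := by
      rw [← div_eq_mul_inv, div_le_one (by positivity)]
      exact pow_le_pow_left₀ hz.1 hz.2 2
    simp only
    rw [min_eq_right (by linarith)]
    ring
  have e2 : ∫ z in s..1, π * min (1 - z^2) (z^2*((s^2)⁻¹ - 1)) =
      ∫ z in s..1, (π - π * z^2) := by
    apply intervalIntegral.integral_congr
    intro z hz
    rw [uIcc_of_le hs1] at hz
    have : 1 ≤ z^2 * (s^2)⁻¹ := by
      rw [← div_eq_mul_inv, one_le_div (by positivity)]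
      exact pow_le_pow_left₀ hs0.le hz.1 2
    simp only
    rw [min_eq_left (by linarith)]
    ring
  rw [e1, e2, intervalIntegral.integral_mul_const, intervalIntegral.integral_sub
    (by simp) (by apply Continuous.intervalIntegrable; fun_prop),
    intervalIntegral.integral_const_mul]
  simp only [integral_pow, intervalIntegral.integral_const, smul_eq_mul]
  field_simp
  norm_num
  ring

lemma vol_prod (s : ℝ) (hs0 : 0 < s) (hs1 : s ≤ 1) :
    volume {p : ℝ × ℂ | p.1^2 + ‖p.2‖^2 < 1 ∧ s * √(p.1^2+‖p.2‖^2) ≤ p.1} =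
      ENNReal.ofReal (2*π/3*(1-s)) := by
  have hc : Continuous fun z : ℝ => π * min (1 - z^2) (z^2*((s^2)⁻¹ - 1)) := by fun_prop
  rw [Measure.volume_eq_prod, Measure.prod_apply]
  · have : ∀ᵐ z : ℝ, volume (Prod.mk z ⁻¹' {p : ℝ × ℂ | p.1^2 + ‖p.2‖^2 < 1 ∧ s * √(p.1^2+‖p.2‖^2) ≤ p.1}) =
       (Ioc 0 1).indicator (fun z => ENNReal.ofReal (π * min (1 - z^2) (z^2*((s^2)⁻¹ - 1)))) z := by
      filter_upwards [compl_mem_ae_iff.2 (measure_singleton (0:ℝ))] with z hz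
      exact slice_vol s hs0 hs1 z hz
    rw [lintegral_congr_ae this, lintegral_indicator measurableSet_Ioc, ← int_min s hs0 hs1,
      intervalIntegral.integral_of_le zero_le_one, ofReal_integral_eq_lintegral_ofReal]
    · exact (hc.intervalIntegrable 0 1).1
    · rw [Filter.EventuallyLE, ae_restrict_iff' measurableSet_Ioc]
      refine Eventually.of_forall fun z hz => ?_
      have hs2 : 1 ≤ (s^2)⁻¹ := by
        apply (one_le_inv₀ (by positivity)).2; nlinarith
      apply mul_nonneg Real.pi_pos.le
      apply le_min
      · nlinarith [hz.1, hz.2]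
      · apply mul_nonneg (by positivity); linarith
  · apply MeasurableSet.inter (s₁ := {p : ℝ × ℂ | p.1^2 + ‖p.2‖^2 < 1})
      (s₂ := {p : ℝ × ℂ | s * √(p.1^2+‖p.2‖^2) ≤ p.1})
    · exact measurableSet_lt (by fun_prop) (by fun_prop)
    · exact measurableSet_le (by fun_prop) (by fun_prop)

open scoped Pointwise in
lemma surf_cap (x : S2) (s : ℝ) (hs0 : 0 < s) (hs1 : s ≤ 1) :
    surf {u : S2 | s ≤ inner ℝ (x : E3) (u : E3)} = ENNReal.ofReal (2*π*(1-s)) := by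
  obtain ⟨Φ, hΦ⟩ := exists_iso x
  have hm : MeasurableSet {u : S2 | s ≤ inner ℝ (x : E3) (u : E3)} :=
    measurableSet_le (by fun_prop) (by fun_prop)
  have hx : ‖(x : E3)‖ = 1 := by simp
  rw [surf, Measure.toSphere_apply' _ hm]
  have e : (Ioo (0:ℝ) 1 • (Set.image Subtype.val {u : S2 | s ≤ inner ℝ (x : E3) (u : E3)}) : Set E3) =
      {p | ‖p‖ < 1 ∧ s * ‖p‖ ≤ inner ℝ (x : E3) p} \ {0} := by
    ext p
    simp only [Set.mem_smul, Set.mem_sdiff, Set.mem_ofPred_eq, Set.mem_singleton_iff]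
    constructor
    · rintro ⟨r, hr, q, ⟨u, hu, rfl⟩, rfl⟩
      have hu1 : ‖(u : E3)‖ = 1 := by simp
      refine ⟨⟨?_, ?_⟩, ?_⟩
      · rw [norm_smul, hu1, Real.norm_of_nonneg hr.1.le, mul_one]; exact hr.2
      · rw [norm_smul, hu1, Real.norm_of_nonneg hr.1.le, mul_one, inner_smul_right, mul_comm]
        exact mul_le_mul_of_nonneg_left hu hr.1.le
      · intro h
        have := congrArg norm h
        rw [norm_smul, hu1, Real.norm_of_nonneg hr.1.le] at this
        simp at this; linarith [hr.1]
    · rintro ⟨⟨h1, h2⟩, h3⟩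
      have hp : 0 < ‖p‖ := norm_pos_iff.2 h3
      refine ⟨‖p‖, ⟨hp, h1⟩, ‖p‖⁻¹ • p, ⟨⟨‖p‖⁻¹ • p, ?_⟩, ?_, rfl⟩, ?_⟩
      · simp [norm_smul, hp.ne']
      · simp only [Set.mem_ofPred_eq, inner_smul_right]
        rw [inv_mul_eq_div, le_div_iff₀ hp]; exact h2
      · rw [smul_smul, mul_inv_cancel₀ hp.ne', one_smul]
  rw [e, measure_sdiff_null (measure_singleton _)]
  have e2 : {p : E3 | ‖p‖ < 1 ∧ s * ‖p‖ ≤ inner ℝ (x : E3) p} =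
      Φ ⁻¹' (WithLp.ofLp ⁻¹' {p : ℝ × ℂ | p.1^2 + ‖p.2‖^2 < 1 ∧ s * √(p.1^2+‖p.2‖^2) ≤ p.1}) := by
    ext p
    have n1 : ‖p‖ = √((Φ p).fst^2+‖(Φ p).snd‖^2) := by
      rw [← Φ.norm_map, WithLp.prod_norm_eq_of_L2]; simp
    have n2 : inner ℝ (x : E3) p = (Φ p).fst := by
      rw [← Φ.inner_map_map, hΦ]; simp [WithLp.prod_inner_apply]
    have n3 : ‖p‖ < 1 ↔ (Φ p).fst^2+‖(Φ p).snd‖^2 < 1 := by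
      rw [n1, Real.sqrt_lt' one_pos]; simp
    simp only [Set.mem_ofPred_eq, Set.mem_preimage]
    rw [n3, n2, n1]; rfl
  have hM : MeasurableSet {p : ℝ × ℂ | p.1^2 + ‖p.2‖^2 < 1 ∧ s * √(p.1^2+‖p.2‖^2) ≤ p.1} := by
    apply MeasurableSet.inter (s₁ := {p : ℝ × ℂ | p.1^2 + ‖p.2‖^2 < 1})
      (s₂ := {p : ℝ × ℂ | s * √(p.1^2+‖p.2‖^2) ≤ p.1})
    · exact measurableSet_lt (by fun_prop) (by fun_prop)
    · exact measurableSet_le (by fun_prop) (by fun_prop)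
  have mp := (WithLp.volume_preserving_ofLp ℝ ℂ).comp Φ.measurePreserving
  rw [e2, ← Set.preimage_comp, mp.measure_preimage hM.nullMeasurableSet, vol_prod s hs0 hs1]
  simp only [finrank_euclideanSpace, Fintype.card_fin]
  rw [show ((3:ℕ) : ENNReal) = ENNReal.ofReal 3 by simp, ← ENNReal.ofReal_mul (by norm_num)]
  congr 1; ring

lemma exp_ae_ne (z : ℂ) : ∀ᵐ t : ℝ, Complex.exp (t * Complex.I) ≠ z := by
  have : ({t : ℝ | Complex.exp (t * Complex.I) = z}).Countable := by
    by_cases h : ∃ t0 : ℝ, Complex.exp (t0 * Complex.I) = z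
    · obtain ⟨t0, h0⟩ := h
      refine (Set.countable_range (fun n : ℤ => t0 + n * (2 * π))).mono ?_
      intro t ht
      have ht' : Complex.exp (t * Complex.I) = Complex.exp (t0 * Complex.I) := ht.trans h0.symm
      rw [Complex.exp_eq_exp_iff_exists_int] at ht'
      obtain ⟨n, hn⟩ := ht'
      refine ⟨n, ?_⟩
      have := congrArg Complex.im hn
      simp at this
      simp [this]
    · push Not at h
      convert Set.countable_empty (α := ℝ)
      rw [Set.eq_empty_iff_forall_notMem]
      exact h
  exact compl_mem_ae_iff.2 (this.measure_zero volume)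

lemma circ_int (w : ℂ) (A : ℝ) (hA : 0 < A) :
    IntervalIntegrable (fun t : ℝ => Real.log ‖Complex.exp (t * Complex.I) * w - A‖) volume 0 (2*π) ∧
    2 * π * Real.log A ≤ ∫ t in (0:ℝ)..(2*π), Real.log ‖Complex.exp (t * Complex.I) * w - A‖ := by
  by_cases hw : w = 0
  · subst hw
    simp [abs_of_pos hA]
  have hwn : 0 < ‖w‖ := norm_pos_iff.2 hw
  have hI := circleIntegrable_log_norm_sub_const (a := (A:ℂ) / w) (c := 0) 1
  have hav := circleAverage_log_norm_sub_const_eq_posLog (a := (A:ℂ) / w)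
  rw [circleAverage_def] at hav
  unfold CircleIntegrable at hI
  simp only [circleMap, Complex.ofReal_one, one_mul, zero_add] at hI hav
  have e : ∀ t : ℝ, t ∈ (({t : ℝ | Complex.exp (t * Complex.I) = A / w})ᶜ) →
      Real.log ‖Complex.exp (t * Complex.I) * w - A‖ =
      Real.log ‖Complex.exp (t * Complex.I) - A / w‖ + Real.log ‖w‖ := by
    intro t ht
    rw [← Real.log_mul _ hwn.ne', ← norm_mul, sub_mul, div_mul_cancel₀ _ hw]
    rw [norm_ne_zero_iff, sub_ne_zero]; exact ht
  have hnull : ∀ᵐ t : ℝ, t ∈ (({t : ℝ | Complex.exp (t * Complex.I) = A / w})ᶜ) := by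
    exact exp_ae_ne _
  have hI2 := hI.add (intervalIntegrable_const (c := Real.log ‖w‖) (μ := volume))
  constructor
  · refine hI2.congr_ae ?_
    refine ae_restrict_of_ae ?_
    filter_upwards [hnull] with t ht
    exact (e t ht).symm
  · have : ∫ t in (0:ℝ)..(2*π), Real.log ‖Complex.exp (t * Complex.I) * w - A‖ =
      ∫ t in (0:ℝ)..(2*π), (Real.log ‖Complex.exp (t * Complex.I) - A / w‖ + Real.log ‖w‖) := by
      apply intervalIntegral.integral_congr_ae
      filter_upwards [hnull] with t ht _
      exact e t ht
    rw [this, intervalIntegral.integral_add hI intervalIntegrable_const,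
      intervalIntegral.integral_const]
    have h2 : ∫ t in (0:ℝ)..(2*π), Real.log ‖Complex.exp (t * Complex.I) - A / w‖ =
      2 * π * Real.posLog ‖(A:ℂ)/w‖ := by
      rw [← hav, smul_eq_mul, mul_inv_cancel_left₀ (by positivity)]
    rw [h2]
    have h3 : Real.log ‖(A:ℂ)/w‖ ≤ Real.posLog ‖(A:ℂ)/w‖ := le_max_right _ _
    have h4 : Real.log ‖(A:ℂ)/w‖ = Real.log A - Real.log ‖w‖ := by
      rw [norm_div, Real.log_div (by simpa using hA.ne') hwn.ne']
      simp
    have := Real.pi_pos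
    simp only [sub_zero, smul_eq_mul]
    nlinarith

def capS (x : S2) (s : ℝ) : Set S2 := {u | s ≤ inner ℝ (x : E3) (u : E3)}

lemma capS_closed (x : S2) (s : ℝ) : IsClosed (capS x s) :=
  isClosed_le (by fun_prop) (by fun_prop)

/-- distribution constant -/
def kap : ℝ := ((surf Set.univ)⁻¹).toReal * (2 * π)

lemma surf_univ_ne_zero : surf Set.univ ≠ 0 := by
  rw [Ne, Measure.measure_univ_eq_zero, surf]
  exact Measure.toSphere_ne_zero _

lemma surf_univ_ne_top : surf Set.univ ≠ ⊤ := by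
  rw [surf]
  exact measure_ne_top _ _

lemma kap_pos : 0 < kap := by
  have : 0 < ((surf Set.univ)⁻¹).toReal :=
    ENNReal.toReal_pos (ENNReal.inv_ne_zero.2 surf_univ_ne_top)
      (ENNReal.inv_ne_top.2 surf_univ_ne_zero)
  unfold kap; positivity

lemma sigma_cap (x : S2) (s : ℝ) (hs0 : 0 < s) (hs1 : s ≤ 1) :
    sigma2 (capS x s) = ENNReal.ofReal (kap * (1-s)) := by
  rw [sigma2, Measure.smul_apply, capS, surf_cap x s hs0 hs1, smul_eq_mul, kap, mul_assoc _ (2*π),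
    ENNReal.ofReal_mul ENNReal.toReal_nonneg, ENNReal.ofReal_toReal (ENNReal.inv_ne_top.2 surf_univ_ne_zero)]

lemma sigma_singleton (x : S2) : sigma2 {x} = 0 := by
  refine measure_mono_null (t := capS x 1) ?_ ?_
  · rintro _ rfl
    simp [capS]
  · rw [sigma_cap x 1 one_pos le_rfl]; simp

lemma map_dist (x : S2) (s : ℝ) (hs0 : 0 < s) (hs1 : s ≤ 1) :
    (sigma2.restrict (capS x s)).map (fun u : S2 => inner ℝ (x : E3) (u : E3)) =
      ENNReal.ofReal kap • (volume.restrict (Icc s 1)) := by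
  have hm : Measurable (fun u : S2 => inner ℝ (x : E3) (u : E3)) := by fun_prop
  apply Measure.ext_of_Ici
  intro t
  rw [Measure.map_apply hm measurableSet_Ici, Measure.restrict_apply (hm measurableSet_Ici),
    Measure.smul_apply, Measure.restrict_apply measurableSet_Ici, smul_eq_mul]
  have e1 : (fun u : S2 => inner ℝ (x : E3) (u : E3)) ⁻¹' Ici t ∩ capS x s = capS x (max t s) := by
    ext u; simp [capS]
  have e2 : Ici t ∩ Icc s 1 = Icc (max t s) 1 := by
    ext u; simp [and_assoc]
  rw [e1, e2, Real.volume_Icc, ← ENNReal.ofReal_mul kap_pos.le]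
  by_cases ht : t ≤ 1
  · exact sigma_cap x _ (lt_max_of_lt_right hs0) (max_le ht hs1)
  · have : capS x (max t s) = ∅ := by
      rw [Set.eq_empty_iff_forall_notMem]
      intro u hu
      have h1 : inner ℝ (x : E3) (u : E3) ≤ 1 := by
        have := real_inner_le_norm (x : E3) (u : E3)
        simpa using this
      have h2 : max t s ≤ inner ℝ (x : E3) (u : E3) := hu
      have := le_max_left t s
      linarith
    rw [this, measure_empty, ENNReal.ofReal_of_nonpos]
    have := le_max_left t s
    exact mul_nonpos_of_nonneg_of_nonpos kap_pos.le (by linarith)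

lemma int_cap (x : S2) (s : ℝ) (hs0 : 0 < s) (hs1 : s ≤ 1) (h : ℝ → ℝ) (hh : Measurable h) :
    ∫ u in capS x s, h (inner ℝ (x : E3) (u : E3)) ∂sigma2 = kap * ∫ c in s..1, h c := by
  have hm : Measurable (fun u : S2 => inner ℝ (x : E3) (u : E3)) := by fun_prop
  rw [← integral_map hm.aemeasurable hh.aestronglyMeasurable, map_dist x s hs0 hs1,
    integral_smul_measure, ENNReal.toReal_ofReal kap_pos.le, smul_eq_mul,
    intervalIntegral.integral_of_le hs1, integral_Icc_eq_integral_Ioc]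

lemma int_log_one_add (s : ℝ) (L : ℝ) :
    ∫ c in s..1, (L - (1/2) * Real.log (1+c)) =
      (1-s) * L - Real.log 2 + (1/2)*(1+s)*Real.log (1+s) + (1/2)*(1-s) := by
  have : IntervalIntegrable (fun c => Real.log (1+c)) volume s 1 := by
    have := (intervalIntegral.intervalIntegrable_log' (a := 1+s) (b := 1+1)).comp_add_left 1
    simpa using this
  rw [intervalIntegral.integral_sub intervalIntegrable_const (this.const_mul _),
    intervalIntegral.integral_const_mul, intervalIntegral.integral_comp_add_left (fun c => Real.log c),
    integral_log, intervalIntegral.integral_const]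
  norm_num
  ring

lemma rotW_apply (t : ℝ) (q : WW) :
    rotW t q = WithLp.toLp 2 (q.fst, Complex.exp (t * Complex.I) * q.snd) := by
  rfl

lemma dist_identity (p q : WW) (hp : ‖p‖ = 1) (hq : ‖q‖ = 1) (e : ℂ) (he : ‖e‖ = 1) :
    ‖(WithLp.toLp 2 (p.fst, e * p.snd) : WW) - q‖ ^ 2 * ((1 + p.fst) * (1 - q.fst)) =
      ‖e * (p.snd * (starRingEnd ℂ) q.snd) - (((1 + p.fst) * (1 - q.fst) : ℝ) : ℂ)‖ ^ 2 := by
  have hp2 : p.fst^2 + ‖p.snd‖^2 = 1 := by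
    have := WithLp.prod_norm_sq_eq_of_L2 p
    rw [hp] at this; simp at this; linarith
  have hq2 : q.fst^2 + ‖q.snd‖^2 = 1 := by
    have := WithLp.prod_norm_sq_eq_of_L2 q
    rw [hq] at this; simp at this; linarith
  rw [WithLp.prod_norm_sq_eq_of_L2]
  have he2 : e.re^2 + e.im^2 = 1 := by
    have := Complex.sq_norm e
    rw [he, Complex.normSq_apply] at this; linarith
  simp only [Complex.sq_norm, Complex.normSq_apply] at *
  simp
  generalize p.snd.re = a at *
  generalize p.snd.im = b at *
  generalize q.snd.re = c at *
  generalize q.snd.im = d at *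
  generalize p.fst = z at *
  generalize q.fst = z' at *
  generalize e.re = m at *
  generalize e.im = n at *
  linear_combination he2 * (((1+z)*(1-z')) * (a*a+b*b) - (a*a+b*b)*(c*c+d*d)) +
    hp2 * ((1+z)*(1-z') - (c*c+d*d)) + hq2 * ((1+z)*(1-z') - (1-z^2))

lemma inner_lt_one {x v : S2} (h : x ≠ v) : inner ℝ (x : E3) (v : E3) < 1 := by
  have h1 : inner ℝ (x : E3) (v : E3) ≤ 1 := by
    have := real_inner_le_norm (x : E3) (v : E3)
    simpa using this
  refine lt_of_le_of_ne h1 fun h2 => h ?_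
  ext1
  exact (inner_eq_one_iff_of_norm_eq_one (by simp) (by simp)).1 h2

lemma dist_sq (x v : S2) : dist x v ^ 2 = 2 * (1 - inner ℝ (x : E3) (v : E3)) := by
  rw [Subtype.dist_eq, dist_eq_norm, norm_sub_sq_real]
  simp; ring

lemma dist_le_two (x v : S2) : dist x v ≤ 2 := by
  rw [Subtype.dist_eq, dist_eq_norm]
  refine (norm_sub_le _ _).trans ?_
  simp; norm_num

lemma log_dist_le (x v : S2) : 0 ≤ Real.log 2 - Real.log (dist x v) := by
  rcases (dist_nonneg (x := x) (y := v)).eq_or_lt with h | h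
  · rw [← h]; simp; positivity
  · have := Real.log_le_log h (dist_le_two x v); linarith

lemma rot_avg (x v : S2) (hxv : x ≠ v) (Φ : E3 ≃ₗᵢ[ℝ] WW)
    (hΦ : Φ x = WithLp.toLp 2 ((1:ℝ), (0:ℂ))) (u : S2) (hu : 0 < inner ℝ (x : E3) (u : E3)) :
    ∫⁻ t in Ioc 0 (2*π), ENNReal.ofReal (Real.log 2 -
      Real.log (dist (sphMap ((Φ.trans (rotW t)).trans Φ.symm) u) v)) ≤
    ENNReal.ofReal (2*π) * ENNReal.ofReal (Real.log 2 - (1/2) * Real.log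
      ((1 + inner ℝ (x : E3) (u : E3)) * (1 - inner ℝ (x : E3) (v : E3)))) := by
  have n2 : ∀ p : E3, inner ℝ (x : E3) p = (Φ p).fst := by
    intro p
    rw [← Φ.inner_map_map, hΦ]; simp [WithLp.prod_inner_apply]
  have hv := inner_lt_one hxv
  set A := (1 + inner ℝ (x : E3) (u : E3)) * (1 - inner ℝ (x : E3) (v : E3)) with hA
  have hA0 : 0 < A := mul_pos (by linarith) (by linarith)
  set w : ℂ := (Φ u).snd * (starRingEnd ℂ) (Φ v).snd with hw
  obtain ⟨hI, hle⟩ := circ_int w A hA0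
  have hd : ∀ t : ℝ, dist (sphMap ((Φ.trans (rotW t)).trans Φ.symm) u) v ^ 2 * A =
      ‖Complex.exp (t * Complex.I) * w - A‖^2 := by
    intro t
    have := dist_identity (Φ u) (Φ v) (by simp) (by simp) (Complex.exp (t * Complex.I))
      (Complex.norm_exp_ofReal_mul_I t)
    rw [← n2, ← n2, ← hA] at this
    rw [← this, Subtype.dist_eq, dist_eq_norm, ← Φ.norm_map, map_sub]
    simp only [sphMap, LinearIsometryEquiv.trans_apply, LinearIsometryEquiv.apply_symm_apply,
      rotW_apply]
    rw [n2]
  have hae : ∀ᵐ t : ℝ, Real.log 2 - Real.log (dist (sphMap ((Φ.trans (rotW t)).trans Φ.symm) u) v) =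
     Real.log 2 + (1/2) * Real.log A - Real.log ‖Complex.exp (t * Complex.I) * w - A‖ := by
    filter_upwards [exp_ae_ne (A / w)] with t ht
    have h0 : Complex.exp (t * Complex.I) * w - A ≠ 0 := by
      intro h
      have hw0 : w ≠ 0 := by
        intro h'
        rw [h'] at h
        simp at h; exact hA0.ne' h
      apply ht
      rw [eq_div_iff hw0]; exact sub_eq_zero.1 h
    have h1 := hd t
    have h2 : 0 < ‖Complex.exp (t * Complex.I) * w - A‖ := norm_pos_iff.2 h0
    have h3 : dist (sphMap ((Φ.trans (rotW t)).trans Φ.symm) u) v ≠ 0 := by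
      intro h
      rw [h] at h1
      have : 0 < ‖Complex.exp (t * Complex.I) * w - A‖^2 := by positivity
      rw [← h1] at this
      simp at this
    have h4 := congrArg Real.log h1
    rw [Real.log_mul (pow_ne_zero _ h3) hA0.ne', Real.log_pow, Real.log_pow] at h4
    push_cast at h4
    linarith
  have hae' := ae_restrict_of_ae (s := Ioc 0 (2*π)) hae
  have hpi := Real.two_pi_pos
  rw [lintegral_congr_ae (hae'.mono fun t ht => congrArg ENNReal.ofReal ht),
    ← ENNReal.ofReal_mul hpi.le, ← ofReal_integral_eq_lintegral_ofReal]
  · apply ENNReal.ofReal_le_ofReal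
    rw [← intervalIntegral.integral_of_le hpi.le,
      intervalIntegral.integral_sub intervalIntegrable_const hI, intervalIntegral.integral_const]
    simp only [sub_zero, smul_eq_mul]
    nlinarith
  · exact (intervalIntegrable_const.sub hI).1
  · filter_upwards [hae'] with t ht
    rw [← ht]
    exact log_dist_le _ _

lemma lint_le (x v : S2) (hxv : x ≠ v) (s : ℝ) (hs0 : 0 < s) :
    ∫⁻ u in capS x s, ENNReal.ofReal (Real.log 2 - Real.log (dist u v)) ∂sigma2 ≤
    ∫⁻ u in capS x s, ENNReal.ofReal (Real.log 2 - (1/2) * Real.log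
      ((1 + inner ℝ (x : E3) (u : E3)) * (1 - inner ℝ (x : E3) (v : E3)))) ∂sigma2 := by
  obtain ⟨Φ, hΦ⟩ := exists_iso x
  have n2 : ∀ p : E3, inner ℝ (x : E3) p = (Φ p).fst := by
    intro p
    rw [← Φ.inner_map_map, hΦ]; simp [WithLp.prod_inner_apply]
  have hpi := Real.two_pi_pos
  have hF : Measurable fun u : S2 => ENNReal.ofReal (Real.log 2 - Real.log (dist u v)) := by
    fun_prop
  have hjoint : Continuous fun q : ℝ × S2 => sphMap ((Φ.trans (rotW q.1)).trans Φ.symm) q.2 := by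
    refine Continuous.subtype_mk ?_ _
    simp only [LinearIsometryEquiv.trans_apply, rotW_apply]
    refine Φ.symm.continuous.comp ?_
    refine (WithLp.prod_continuous_toLp 2 ℝ ℂ).comp ?_
    have hc : Continuous fun q : ℝ × S2 => Φ q.2 := by fun_prop
    have h1 : Continuous fun q : ℝ × S2 => WithLp.ofLp (Φ q.2) :=
      (WithLp.prod_continuous_ofLp 2 ℝ ℂ).comp hc
    have h2 : Continuous fun q : ℝ × S2 => Complex.exp (q.1 * Complex.I) := by fun_prop
    exact h1.fst.prodMk (h2.mul h1.snd)
  have hFj : Measurable fun q : ℝ × S2 => ENNReal.ofReal (Real.log 2 -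
      Real.log (dist (sphMap ((Φ.trans (rotW q.1)).trans Φ.symm) q.2) v)) :=
    hF.comp hjoint.measurable
  have hinv : ∀ t : ℝ, ∫⁻ u in capS x s, ENNReal.ofReal (Real.log 2 -
      Real.log (dist (sphMap ((Φ.trans (rotW t)).trans Φ.symm) u) v)) ∂sigma2 =
      ∫⁻ u in capS x s, ENNReal.ofReal (Real.log 2 - Real.log (dist u v)) ∂sigma2 := by
    intro t
    have hpre : sphMap ((Φ.trans (rotW t)).trans Φ.symm) ⁻¹' capS x s = capS x s := by
      ext u
      simp [capS, n2, sphMap, rotW_apply]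
    have := (sigma_map ((Φ.trans (rotW t)).trans Φ.symm)).setLIntegral_comp_preimage
      (capS_closed x s).measurableSet hF
    rw [hpre] at this
    exact this
  have h1 : ENNReal.ofReal (2*π) *
      ∫⁻ u in capS x s, ENNReal.ofReal (Real.log 2 - Real.log (dist u v)) ∂sigma2 =
      ∫⁻ t in Ioc 0 (2*π), ∫⁻ u in capS x s, ENNReal.ofReal (Real.log 2 -
      Real.log (dist (sphMap ((Φ.trans (rotW t)).trans Φ.symm) u) v)) ∂sigma2 := by
    simp_rw [hinv]
    rw [setLIntegral_const, Real.volume_Ioc, sub_zero, mul_comm]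
  have h2 : ENNReal.ofReal (2*π) *
      ∫⁻ u in capS x s, ENNReal.ofReal (Real.log 2 - Real.log (dist u v)) ∂sigma2 ≤
      ENNReal.ofReal (2*π) * ∫⁻ u in capS x s, ENNReal.ofReal (Real.log 2 - (1/2) * Real.log
      ((1 + inner ℝ (x : E3) (u : E3)) * (1 - inner ℝ (x : E3) (v : E3)))) ∂sigma2 := by
    rw [h1, lintegral_lintegral_swap hFj.aemeasurable, ← lintegral_const_mul _ (by fun_prop)]
    refine setLIntegral_mono' (capS_closed x s).measurableSet fun u hu => ?_
    exact rot_avg x v hxv Φ hΦ u (lt_of_lt_of_le hs0 hu)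
  rwa [ENNReal.mul_le_mul_iff_right (by simp [Real.pi_pos]) ENNReal.ofReal_ne_top] at h2

/-- the constant -/
def KK (s : ℝ) : ℝ := 1/2 + (1/2) * ((1+s)/(1-s)) * Real.log ((1+s)/2)

lemma key (x v : S2) (hxv : x ≠ v) (s : ℝ) (hs0 : 0 < s) (hs1 : s < 1) :
    IntegrableOn (fun u => Real.log (1 / dist u v)) (capS x s) sigma2 ∧
    ∫ u in capS x s, Real.log (1 / dist u v) ∂sigma2 ≤
      kap * (1-s) * (Real.log (1 / dist x v) + KK s) := by
  have hv := inner_lt_one hxv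
  have hms := (capS_closed x s).measurableSet
  set c' := inner ℝ (x : E3) (v : E3) with hc'
  set L := Real.log 2 - (1/2) * Real.log (1 - c') with hL
  have hH : ∀ u ∈ capS x s, Real.log 2 - (1/2) * Real.log
      ((1 + inner ℝ (x : E3) (u : E3)) * (1 - c')) = 
      L - (1/2) * Real.log (1 + inner ℝ (x : E3) (u : E3)) := by
    intro u hu
    have : 0 < 1 + inner ℝ (x : E3) (u : E3) := by
      have : s ≤ inner ℝ (x : E3) (u : E3) := hu
      linarith
    rw [Real.log_mul this.ne' (by linarith)]; ring
  have hHint : IntegrableOn (fun u : S2 => L - (1/2) * Real.log (1 + inner ℝ (x : E3) (u : E3)))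
      (capS x s) sigma2 := by
    apply ContinuousOn.integrableOn_compact (capS_closed x s).isCompact
    refine continuousOn_const.sub (continuousOn_const.mul (ContinuousOn.log ?_ ?_))
    · fun_prop
    · intro u hu
      have : s ≤ inner ℝ (x : E3) (u : E3) := hu
      linarith
  have hHnn : ∀ u ∈ capS x s, 0 ≤ L - (1/2) * Real.log (1 + inner ℝ (x : E3) (u : E3)) := by
    intro u hu
    have h0 : s ≤ inner ℝ (x : E3) (u : E3) := hu
    rw [← hH u hu]
    have h1 : inner ℝ (x : E3) (u : E3) ≤ 1 := by
      have := real_inner_le_norm (x : E3) (u : E3)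
      simpa using this
    have h2 : -1 ≤ c' := by
      have := neg_le_of_abs_le (abs_real_inner_le_norm (x : E3) (v : E3))
      simpa using this
    have : Real.log ((1 + inner ℝ (x : E3) (u : E3)) * (1 - c')) ≤ Real.log (2^2) := by
      apply Real.log_le_log (mul_pos (by linarith) (by linarith))
      nlinarith
    rw [Real.log_pow] at this
    push_cast at this
    linarith
  have hle := lint_le x v hxv s hs0
  rw [setLIntegral_congr_fun (f := fun u : S2 => ENNReal.ofReal (Real.log 2 - (1/2) * Real.log
      ((1 + inner ℝ (x : E3) (u : E3)) * (1 - c')))) (g := fun u : S2 => ENNReal.ofReal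
    (L - (1/2) * Real.log (1 + inner ℝ (x : E3) (u : E3)))) hms
    (fun u hu => by simp only; rw [← hH u hu]),
    ← ofReal_integral_eq_lintegral_ofReal hHint ((ae_restrict_iff' hms).2 (Eventually.of_forall hHnn))] at hle
  have hFint : IntegrableOn (fun u => Real.log 2 - Real.log (dist u v)) (capS x s) sigma2 := by
    have hmeas : Measurable fun u : S2 => Real.log 2 - Real.log (dist u v) := by fun_prop
    refine ⟨hmeas.aestronglyMeasurable, ?_⟩
    rw [hasFiniteIntegral_iff_ofReal (Eventually.of_forall fun u => log_dist_le u v)]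
    exact lt_of_le_of_lt hle ENNReal.ofReal_lt_top
  rw [← ofReal_integral_eq_lintegral_ofReal hFint (Eventually.of_forall fun u => log_dist_le u v),
    ENNReal.ofReal_le_ofReal_iff (setIntegral_nonneg hms hHnn)] at hle
  have heq : (fun u : S2 => Real.log (1 / dist u v)) =
      fun u => (Real.log 2 - Real.log (dist u v)) - Real.log 2 := by
    funext u; rw [one_div, Real.log_inv]; ring
  have hcI : IntegrableOn (fun _ : S2 => Real.log 2) (capS x s) sigma2 := integrable_const _
  refine ⟨by rw [heq]; exact hFint.sub hcI, ?_⟩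
  rw [heq, integral_sub hFint hcI]
  rw [int_cap x s hs0 hs1.le (fun c => L - (1/2) * Real.log (1+c)) (by fun_prop),
    int_log_one_add] at hle
  rw [setIntegral_const, measureReal_def, sigma_cap x s hs0 hs1.le,
    ENNReal.toReal_ofReal (mul_nonneg kap_pos.le (by linarith)), smul_eq_mul]
  have hd : Real.log (1 / dist x v) = -(1/2) * (Real.log 2 + Real.log (1 - c')) := by
    have := congrArg Real.log (dist_sq x v)
    rw [Real.log_pow, Real.log_mul (by norm_num) (by linarith)] at this
    rw [one_div, Real.log_inv]
    push_cast at this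
    linarith
  refine (sub_le_sub_right hle _).trans (le_of_eq ?_)
  rw [hd, KK, Real.log_div (by linarith) (by norm_num), hL]
  have : 1 - s ≠ 0 := by linarith
  field_simp
  ring

lemma cap_eq (x : S2) (a : ℝ) (ha0 : 0 ≤ a) (ha1 : a ≤ π) : cap x a = capS x (Real.cos a) := by
  ext u
  have h1 := abs_le.1 (abs_real_inner_le_norm (x : E3) (u : E3))
  simp only [norm_eq_of_mem_sphere, mul_one] at h1
  change Real.arccos (inner ℝ (x : E3) (u : E3)) ≤ a ↔ Real.cos a ≤ inner ℝ (x : E3) (u : E3)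
  constructor
  · intro h
    have := Real.cos_le_cos_of_nonneg_of_le_pi (Real.arccos_nonneg _) ha1 h
    rwa [Real.cos_arccos h1.1 h1.2] at this
  · intro h
    have := Real.arccos_le_arccos h
    rwa [Real.arccos_cos ha0 ha1] at this

lemma two_KK (a : ℝ) (ha : a ∈ Set.Ioo 0 (π/2)) :
    2 * KK (Real.cos a) = 1 + 2 * Real.cot (a/2) ^ 2 * Real.log (Real.cos (a/2)) := by
  have hc : 0 < Real.cos (a/2) := Real.cos_pos_of_mem_Ioo
    ⟨by linarith [ha.1, Real.pi_pos], by linarith [ha.2, Real.pi_pos]⟩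
  have hsn : 0 < Real.sin (a/2) := Real.sin_pos_of_pos_of_lt_pi (by linarith [ha.1]) (by linarith [ha.2, Real.pi_pos])
  have e : Real.cos a = 2 * Real.cos (a/2)^2 - 1 := by
    rw [← Real.cos_two_mul]; ring_nf
  have h1 : (1 + Real.cos a)/2 = Real.cos (a/2)^2 := by rw [e]; ring
  have h2 : (1 + Real.cos a)/(1 - Real.cos a) = Real.cot (a/2)^2 := by
    have h3 : 1 - Real.cos a = 2 * Real.sin (a/2)^2 := by
      have := Real.sin_sq_add_cos_sq (a/2); rw [e]; linarith
    rw [h3, e, Real.cot_eq_cos_div_sin]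
    field_simp; ring
  rw [KK, h1, h2, Real.log_pow]
  push_cast; ring

lemma main_capS (s : ℝ) (hs0 : 0 < s) (hs1 : s < 1) (x y : S2) (hxy : x ≠ y) :
    ∫ u in capS x s, ∫ v in capS y s, Real.log (1 / dist u v) ∂sigma2 ∂sigma2 ≤
    (kap * (1-s))^2 * (Real.log (1 / dist x y) + 2 * KK s) := by
  have hM : 0 ≤ kap * (1-s) := mul_nonneg kap_pos.le (by linarith)
  have hvol : ∀ z, sigma2.real (capS z s) = kap * (1-s) := fun z => by
    rw [measureReal_def, sigma_cap z s hs0 hs1.le, ENNReal.toReal_ofReal hM]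
  obtain ⟨hI, hle⟩ := key x y hxy s hs0 hs1
  set M := kap * (1-s) with hMdef
  set f : S2 → ℝ := fun u => ∫ v in capS y s, Real.log (1 / dist u v) ∂sigma2 with hf
  set g : S2 → ℝ := fun u => M * (Real.log (1 / dist u y) + KK s) with hg
  have hgI : IntegrableOn g (capS x s) sigma2 := by
    exact (hI.add (integrable_const _)).const_mul M
  have hne : ∀ᵐ u ∂sigma2, u ≠ y := compl_mem_ae_iff.2 (sigma_singleton y)
  have hup : ∀ u, u ≠ y → f u ≤ g u := by
    intro u hu
    have := (key y u hu.symm s hs0 hs1).2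
    simp_rw [dist_comm _ u] at this
    simp only [hf, hg]
    exact this
  have hlo : ∀ u, u ≠ y → -(M * Real.log 2) ≤ f u := by
    intro u hu
    have h1 := (key y u hu.symm s hs0 hs1).1
    simp_rw [dist_comm _ u] at h1
    have h2 : ∫ v in capS y s, (-Real.log 2) ∂sigma2 ≤ f u := by
      refine integral_mono (integrable_const _) h1 fun v => ?_
      have := log_dist_le u v
      simp only [one_div, Real.log_inv]
      linarith
    rw [setIntegral_const, hvol, smul_eq_mul] at h2
    linarith
  have hfm : AEStronglyMeasurable f (sigma2.restrict (capS x s)) := by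
    apply StronglyMeasurable.aestronglyMeasurable
    apply StronglyMeasurable.integral_prod_right (f := fun u v : S2 => Real.log (1 / dist u v))
    apply Measurable.stronglyMeasurable
    unfold Function.uncurry
    fun_prop
  have hfI : IntegrableOn f (capS x s) sigma2 := by
    refine Integrable.mono' (hgI.abs.add (integrable_const (M * Real.log 2))) hfm ?_
    filter_upwards [ae_restrict_of_ae hne] with u hu
    have h1 := hup u hu
    have h2 := hlo u hu
    have h3 := le_abs_self (g u)
    have h4 := abs_nonneg (g u)
    have h5 : 0 ≤ M * Real.log 2 := by positivity
    simp only [Pi.add_apply, Real.norm_eq_abs]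
    rw [abs_le]; constructor <;> linarith
  have h1 : ∫ u in capS x s, f u ∂sigma2 ≤ ∫ u in capS x s, g u ∂sigma2 := by
    refine integral_mono_ae hfI hgI ?_
    filter_upwards [ae_restrict_of_ae hne] with u hu
    exact hup u hu
  have h2 : ∫ u in capS x s, g u ∂sigma2 =
      M * (∫ u in capS x s, Real.log (1 / dist u y) ∂sigma2 + M * KK s) := by
    simp only [hg]
    rw [integral_const_mul, integral_add hI (integrable_const _), setIntegral_const, hvol,
      smul_eq_mul]
  refine h1.trans (h2.le.trans ?_)
  nlinarith [mul_le_mul_of_nonneg_left hle hM]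

/-- Upper bound for the mutual energy of the normalized uniform measures on two
spherical caps of geodesic radius `a ∈ (0, π/2)`. -/
theorem cap_mutual_energy_le (a : ℝ) (ha : a ∈ Set.Ioo 0 (π/2)) (x y : S2) (hxy : x ≠ y) :
    ((sigma2 (cap x a)).toReal ^ 2)⁻¹ *
      ∫ u in cap x a, ∫ v in cap y a, Real.log (1 / dist u v) ∂sigma2 ∂sigma2 ≤
    Real.log (1 / dist x y) + 1 + 2 * Real.cot (a/2) ^ 2 * Real.log (Real.cos (a/2)) := by
  have hpi := Real.pi_pos
  have hs0 : 0 < Real.cos a := Real.cos_pos_of_mem_Ioo ⟨by linarith [ha.1], ha.2⟩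
  have hs1 : Real.cos a < 1 := by
    have := Real.cos_lt_cos_of_nonneg_of_le_pi le_rfl (by linarith [ha.2]) ha.1
    simpa using this
  have hM : 0 < kap * (1 - Real.cos a) := mul_pos kap_pos (by linarith)
  rw [cap_eq x a ha.1.le (by linarith [ha.2]), cap_eq y a ha.1.le (by linarith [ha.2]),
    sigma_cap x _ hs0 hs1.le, ENNReal.toReal_ofReal hM.le, add_assoc, ← two_KK a ha,
    inv_mul_le_iff₀ (by positivity)]
  exact main_capS _ hs0 hs1 x y hxy
end
end

section
/- For every a ∈ (0, π/2) and all x, y ∈ S² such that the spherical caps B(x,a) and B(y,a) are disjoint, one has (1/σ(B(x,a))²)·∫_{B(x,a)}∫_{B(y,a)} log(1/|u − v|) dσ(u)dσ(v) = log(1/|x − y|) + 1 + 2·cot²(a/2)·log cos(a/2). -/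
open MeasureTheory Real Filter Set

noncomputable section

/-- Cylindrical model of Euclidean 3-space. -/
abbrev T3 : Type := WithLp 2 (ℝ × ℂ)

lemma exists_coords (x : S2) : ∃ L : E3 ≃ₗᵢ[ℝ] T3, L (x : E3) = WithLp.toLp 2 (1, 0) := by
  have hx : ‖(x : E3)‖ = 1 := by simp
  have h1 : Orthonormal ℝ (Set.domRestrict ({0} : Set (Fin 3)) (fun _ => (x : E3))) := by
    rw [orthonormal_iff_ite]
    rintro ⟨i, rfl⟩ ⟨j, rfl⟩
    simp [Set.domRestrict, hx]
  have h2 : Orthonormal ℝ (Set.domRestrict ({0} : Set (Fin 3)) (fun _ => (WithLp.toLp 2 (1, 0) : T3))) := by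
    rw [orthonormal_iff_ite]
    rintro ⟨i, rfl⟩ ⟨j, rfl⟩
    simp [Set.domRestrict]
  have hT : Module.finrank ℝ T3 = Fintype.card (Fin 3) := by
    rw [(WithLp.linearEquiv 2 ℝ (ℝ × ℂ)).finrank_eq]
    simp
  obtain ⟨b, hb⟩ := h1.exists_orthonormalBasis_extension_of_card_eq (by simp)
  obtain ⟨b', hb'⟩ := h2.exists_orthonormalBasis_extension_of_card_eq hT
  refine ⟨b.equiv b' (Equiv.refl _), ?_⟩
  rw [← hb 0 rfl, b.equiv_apply_basis]
  simpa using hb' 0 rfl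

lemma coords_fst {x : S2} {L : E3 ≃ₗᵢ[ℝ] T3} (hL : L (x : E3) = WithLp.toLp 2 (1, 0)) (p : E3) :
    (L p).fst = inner ℝ (x : E3) p := by
  rw [← L.inner_map_map, hL, WithLp.prod_inner_apply]
  simp

lemma T3_norm_sq (q : T3) : ‖q‖ ^ 2 = q.fst ^ 2 + ‖q.snd‖ ^ 2 := by
  rw [WithLp.prod_norm_sq_eq_of_L2]; simp

open scoped Pointwise in
lemma cone_vol (c : ℝ) (hc : 0 < c) (x : S2) (L : E3 ≃ₗᵢ[ℝ] T3)
    (hL : L (x : E3) = WithLp.toLp 2 (1, 0)) :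
    (volume : Measure E3) (Ioo (0 : ℝ) 1 • (((↑) : S2 → E3) '' {u : S2 | c ≤ inner ℝ (x : E3) (u : E3)})) =
    (volume : Measure (ℝ × ℂ)) {q | 0 < q.1 ∧ q.1 ^ 2 + ‖q.2‖ ^ 2 < 1 ∧
      c ^ 2 * (q.1 ^ 2 + ‖q.2‖ ^ 2) ≤ q.1 ^ 2} := by
  have e1 : Ioo (0 : ℝ) 1 • (((↑) : S2 → E3) '' {u : S2 | c ≤ inner ℝ (x : E3) (u : E3)}) =
      L ⁻¹' ((MeasurableEquiv.toLp 2 (ℝ × ℂ)).symm ⁻¹' {q | 0 < q.1 ∧ q.1 ^ 2 + ‖q.2‖ ^ 2 < 1 ∧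
      c ^ 2 * (q.1 ^ 2 + ‖q.2‖ ^ 2) ≤ q.1 ^ 2}) := by
    ext p
    have hn : (L p).fst ^ 2 + ‖(L p).snd‖ ^ 2 = ‖p‖ ^ 2 := by
      rw [← T3_norm_sq, L.norm_map]
    have : p ∈ L ⁻¹' ((MeasurableEquiv.toLp 2 (ℝ × ℂ)).symm ⁻¹' {q | 0 < q.1 ∧ q.1 ^ 2 + ‖q.2‖ ^ 2 < 1 ∧
      c ^ 2 * (q.1 ^ 2 + ‖q.2‖ ^ 2) ≤ q.1 ^ 2}) ↔ (0 < (L p).fst ∧ (L p).fst ^ 2 + ‖(L p).snd‖ ^ 2 < 1 ∧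
      c ^ 2 * ((L p).fst ^ 2 + ‖(L p).snd‖ ^ 2) ≤ (L p).fst ^ 2) := Iff.rfl
    rw [this, hn, coords_fst hL]
    constructor
    · rintro ⟨r, hr, _, ⟨u, hu, rfl⟩, rfl⟩
      have hu1 : ‖(u : E3)‖ = 1 := by simp
      simp only [mem_ofPred_eq] at hu
      simp only [inner_smul_right, norm_smul, hu1, norm_eq_abs, mul_one, sq_abs]
      refine ⟨mul_pos hr.1 (by linarith), by nlinarith [hr.1, hr.2], ?_⟩
      rw [mul_pow, mul_comm]
      gcongr
    · rintro ⟨h0, h1, h2⟩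
      have hp : p ≠ 0 := by rintro rfl; simp at h0
      have hp' : 0 < ‖p‖ := norm_pos_iff.mpr hp
      refine ⟨‖p‖, ⟨hp', by nlinarith⟩, ‖p‖⁻¹ • p, ⟨⟨‖p‖⁻¹ • p, ?_⟩, ?_, rfl⟩, ?_⟩
      · simp [norm_smul, hp]
      · simp only [mem_ofPred_eq, inner_smul_right]
        rw [← mul_pow] at h2
        have := (sq_le_sq₀ (by positivity) h0.le).1 h2
        rw [inv_mul_eq_div, le_div_iff₀ hp']; exact this
      · simp [smul_smul, hp]
  have hm : MeasurableSet {q : ℝ × ℂ | 0 < q.1 ∧ q.1 ^ 2 + ‖q.2‖ ^ 2 < 1 ∧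
      c ^ 2 * (q.1 ^ 2 + ‖q.2‖ ^ 2) ≤ q.1 ^ 2} := by
    have h1 : MeasurableSet {q : ℝ × ℂ | 0 < q.1} := measurableSet_lt (by fun_prop) (by fun_prop)
    have h2 : MeasurableSet {q : ℝ × ℂ | q.1 ^ 2 + ‖q.2‖ ^ 2 < 1} :=
      measurableSet_lt (by fun_prop) (by fun_prop)
    have h3 : MeasurableSet {q : ℝ × ℂ | c ^ 2 * (q.1 ^ 2 + ‖q.2‖ ^ 2) ≤ q.1 ^ 2} :=
      measurableSet_le (by fun_prop) (by fun_prop)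
    exact h1.inter (h2.inter h3)
  rw [e1, L.measurePreserving.measure_preimage
    ((MeasurableEquiv.toLp 2 (ℝ × ℂ)).symm.measurable hm).nullMeasurableSet,
    (WithLp.volume_preserving_symm_measurableEquiv_toLp_prod ℝ ℂ).measure_preimage
      hm.nullMeasurableSet]

lemma solid_vol (c : ℝ) (hc : 0 < c) (hc1 : c ≤ 1) :
    (volume : Measure (ℝ × ℂ)) {q | 0 < q.1 ∧ q.1 ^ 2 + ‖q.2‖ ^ 2 < 1 ∧
      c ^ 2 * (q.1 ^ 2 + ‖q.2‖ ^ 2) ≤ q.1 ^ 2} = ENNReal.ofReal (2 * π / 3 * (1 - c)) := by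
  have hm : MeasurableSet {q : ℝ × ℂ | 0 < q.1 ∧ q.1 ^ 2 + ‖q.2‖ ^ 2 < 1 ∧
      c ^ 2 * (q.1 ^ 2 + ‖q.2‖ ^ 2) ≤ q.1 ^ 2} := by
    have h1 : MeasurableSet {q : ℝ × ℂ | 0 < q.1} := measurableSet_lt (by fun_prop) (by fun_prop)
    have h2 : MeasurableSet {q : ℝ × ℂ | q.1 ^ 2 + ‖q.2‖ ^ 2 < 1} :=
      measurableSet_lt (by fun_prop) (by fun_prop)
    have h3 : MeasurableSet {q : ℝ × ℂ | c ^ 2 * (q.1 ^ 2 + ‖q.2‖ ^ 2) ≤ q.1 ^ 2} :=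
      measurableSet_le (by fun_prop) (by fun_prop)
    exact h1.inter (h2.inter h3)
  have hc2 : 0 ≤ (1 - c ^ 2) / c ^ 2 := div_nonneg (by nlinarith) (by positivity)
  rw [Measure.volume_eq_prod, Measure.prod_apply hm]
  have hs : ∀ z : ℝ, (volume : Measure ℂ) (Prod.mk z ⁻¹' {q : ℝ × ℂ | 0 < q.1 ∧ q.1 ^ 2 + ‖q.2‖ ^ 2 < 1 ∧
      c ^ 2 * (q.1 ^ 2 + ‖q.2‖ ^ 2) ≤ q.1 ^ 2}) =
      (Ioc 0 c).indicator (fun z => ENNReal.ofReal (π * ((1 - c ^ 2) / c ^ 2) * z ^ 2)) z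
      + (Ioc c 1).indicator (fun z => ENNReal.ofReal (π * (1 - z ^ 2))) z := by
    intro z
    have hpi : (NNReal.pi : ENNReal) = ENNReal.ofReal π := by
      rw [← NNReal.coe_real_pi, ENNReal.ofReal_coe_nnreal]
    simp only [preimage_ofPred_eq]
    by_cases h0 : 0 < z
    · have key : ∀ w : ℝ, c ^ 2 * (z ^ 2 + w ^ 2) ≤ z ^ 2 ↔ w ^ 2 ≤ (1 - c ^ 2) / c ^ 2 * z ^ 2 := by
        intro w
        rw [div_mul_eq_mul_div, le_div_iff₀ (by positivity)]
        constructor <;> intro h <;> linarith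
      rcases lt_or_ge z c with h | h
      · have : {w : ℂ | 0 < z ∧ z ^ 2 + ‖w‖ ^ 2 < 1 ∧ c ^ 2 * (z ^ 2 + ‖w‖ ^ 2) ≤ z ^ 2} =
            Metric.closedBall 0 (√((1 - c ^ 2) / c ^ 2 * z ^ 2)) := by
          ext w
          simp only [mem_ofPred_eq, mem_closedBall_zero_iff]
          rw [Real.le_sqrt (norm_nonneg _) (by positivity), ← key]
          constructor
          · exact fun h => h.2.2
          · intro h'
            refine ⟨h0, ?_, h'⟩
            have : z ^ 2 < c ^ 2 := by gcongr
            by_contra hh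
            nlinarith [sq_pos_of_pos hc]
        rw [this, Complex.volume_closedBall, ← ENNReal.ofReal_pow (sqrt_nonneg _), Real.sq_sqrt (by positivity), hpi,
          ← ENNReal.ofReal_mul (by positivity), indicator_of_mem (s := Ioc 0 c) ⟨h0, h.le⟩, indicator_of_notMem (by simp [h.le])]
        rw [add_zero]; congr 1; ring
      · rcases lt_or_ge z 1 with h1 | h1
        · have hz1 : 0 ≤ 1 - z ^ 2 := by nlinarith
          have : {w : ℂ | 0 < z ∧ z ^ 2 + ‖w‖ ^ 2 < 1 ∧ c ^ 2 * (z ^ 2 + ‖w‖ ^ 2) ≤ z ^ 2} =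
              Metric.ball 0 (√(1 - z ^ 2)) := by
            ext w
            simp only [mem_ofPred_eq, mem_ball_zero_iff]
            rw [Real.lt_sqrt (norm_nonneg _)]
            constructor
            · intro h; linarith [h.2.1]
            · intro h'
              have : c ^ 2 ≤ z ^ 2 := by gcongr
              refine ⟨h0, by linarith, ?_⟩
              nlinarith [sq_pos_of_pos hc]
          rw [this, Complex.volume_ball, ← ENNReal.ofReal_pow (sqrt_nonneg _), Real.sq_sqrt (by positivity), hpi,
            ← ENNReal.ofReal_mul (by positivity)]
          rcases h.eq_or_lt with rfl | h
          · rw [indicator_of_mem (s := Ioc 0 c) ⟨h0, le_rfl⟩, indicator_of_notMem (by simp)]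
            rw [add_zero]; congr 1; field_simp
          · rw [indicator_of_mem (s := Ioc c 1) ⟨h, h1.le⟩, indicator_of_notMem (by simp [h])]
            rw [zero_add]; congr 1; ring
        · have : {w : ℂ | 0 < z ∧ z ^ 2 + ‖w‖ ^ 2 < 1 ∧ c ^ 2 * (z ^ 2 + ‖w‖ ^ 2) ≤ z ^ 2} = ∅ := by
            ext w
            simp only [mem_ofPred_eq, mem_empty_iff_false, iff_false]
            intro h; nlinarith [h.2.1, sq_nonneg ‖w‖]
          rw [this, measure_empty]
          symm
          rw [add_eq_zero]
          simp only [indicator_apply_eq_zero, ENNReal.ofReal_eq_zero]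
          constructor
          · rintro ⟨_, h3⟩
            have : c = 1 := by linarith
            simp [this]
          · rintro ⟨_, h3⟩
            have : z = 1 := by linarith
            simp [this]
    · have : {w : ℂ | 0 < z ∧ z ^ 2 + ‖w‖ ^ 2 < 1 ∧ c ^ 2 * (z ^ 2 + ‖w‖ ^ 2) ≤ z ^ 2} = ∅ := by
        simp [h0]
      rw [this, measure_empty, indicator_of_notMem (by simp [h0]), indicator_of_notMem]
      · simp
      · simp only [mem_Ioc, not_and]; intro h; linarith
  simp_rw [hs]
  rw [lintegral_add_left (by measurability), lintegral_indicator measurableSet_Ioc,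
    lintegral_indicator measurableSet_Ioc,
    ← ofReal_integral_eq_lintegral_ofReal, ← ofReal_integral_eq_lintegral_ofReal,
    ← ENNReal.ofReal_add, ← intervalIntegral.integral_of_le hc.le,
    ← intervalIntegral.integral_of_le hc1]
  · congr 1
    simp [integral_pow]
    field_simp
    ring
  · exact integral_nonneg fun z => by positivity
  · refine setIntegral_nonneg measurableSet_Ioc fun z hz => ?_
    have := hz.1; have := hz.2
    exact mul_nonneg pi_pos.le (by nlinarith)
  · exact (Continuous.integrableOn_Icc (by fun_prop)).mono_set Ioc_subset_Icc_self
  · refine (ae_restrict_iff' measurableSet_Ioc).2 (Eventually.of_forall fun z hz => ?_)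
    have := hz.1; have := hz.2
    exact mul_nonneg pi_pos.le (by nlinarith)
  · exact (Continuous.integrableOn_Icc (by fun_prop)).mono_set Ioc_subset_Icc_self
  · exact Eventually.of_forall fun z => by positivity

lemma meas_cap' (x : S2) (c : ℝ) : MeasurableSet {u : S2 | c ≤ inner ℝ (x : E3) (u : E3)} :=
  measurableSet_le (by fun_prop) (by fun_prop)

lemma surf_univ : surf univ = ENNReal.ofReal (4 * π) := by
  rw [surf, Measure.toSphere_apply_univ, EuclideanSpace.volume_ball_fin_three]
  rw [finrank_euclideanSpace, Fintype.card_fin, ENNReal.ofReal_one, one_pow, one_mul,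
    show ((3 : ℕ) : ENNReal) = ENNReal.ofReal 3 by simp, ← ENNReal.ofReal_mul (by norm_num)]
  congr 1; ring

lemma sigma_cap' (x : S2) (c : ℝ) (hc : 0 < c) :
    sigma2 {u : S2 | c ≤ inner ℝ (x : E3) (u : E3)} = ENNReal.ofReal ((1 - c) / 2) := by
  rcases le_or_gt c 1 with h | h
  · obtain ⟨L, hL⟩ := exists_coords x
    rw [sigma2, Measure.smul_apply, surf_univ, surf, Measure.toSphere_apply' _ (meas_cap' x c),
      cone_vol c hc x L hL, solid_vol c hc h, ← ENNReal.ofReal_inv_of_pos (by positivity)]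
    simp only [finrank_euclideanSpace, Fintype.card_fin, smul_eq_mul]
    rw [show ((3 : ℕ) : ENNReal) = ENNReal.ofReal 3 by simp, ← ENNReal.ofReal_mul (by norm_num),
      ← ENNReal.ofReal_mul (by positivity)]
    congr 1; field_simp; ring
  · rw [ENNReal.ofReal_of_nonpos (by linarith)]
    convert measure_empty (μ := sigma2)
    ext u
    simp only [mem_ofPred_eq, mem_empty_iff_false, iff_false, not_le]
    have hu1 : ‖(u : E3)‖ = 1 := by simp
    have hx1 : ‖(x : E3)‖ = 1 := by simp
    have := real_inner_le_norm (x : E3) (u : E3)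
    rw [hu1, hx1] at this; linarith

lemma T3_ext {p q : T3} (h1 : p.fst = q.fst) (h2 : p.snd = q.snd) : p = q := by
  apply WithLp.ofLp_injective
  exact Prod.ext h1 h2

/-- Rotation of the cylindrical model about the axis. -/
def rotT (φ : ℝ) : T3 ≃ₗᵢ[ℝ] T3 where
  toFun q := WithLp.toLp 2 (q.fst, circleMap 0 1 φ * q.snd)
  invFun q := WithLp.toLp 2 (q.fst, circleMap 0 1 (-φ) * q.snd)
  map_add' p q := by apply T3_ext <;> simp [mul_add]
  map_smul' r q := by apply T3_ext <;> simp [mul_left_comm]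
  left_inv q := by
    apply T3_ext
    · simp
    · simp [circleMap, ← mul_assoc, ← Complex.exp_add]
  right_inv q := by
    apply T3_ext
    · simp
    · simp [circleMap, ← mul_assoc, ← Complex.exp_add]
  norm_map' q := by
    rw [← sq_eq_sq₀ (norm_nonneg _) (norm_nonneg _), T3_norm_sq, T3_norm_sq]
    simp

lemma rotT_apply (φ : ℝ) (q : T3) : rotT φ q = WithLp.toLp 2 (q.fst, circleMap 0 1 φ * q.snd) := rfl

/-- Action of a linear isometry on the sphere. -/
def actS (R : E3 ≃ₗᵢ[ℝ] E3) (u : S2) : S2 := ⟨R u, by simp⟩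

open scoped Pointwise in
lemma actS_mp (R : E3 ≃ₗᵢ[ℝ] E3) : MeasurePreserving (actS R) sigma2 sigma2 := by
  have hm : Measurable (actS R) := by
    apply Measurable.subtype_mk
    fun_prop
  refine ⟨hm, ?_⟩
  ext s hs
  rw [Measure.map_apply hm hs]
  simp only [sigma2, Measure.smul_apply, surf]
  rw [Measure.toSphere_apply' _ hs, Measure.toSphere_apply' _ (hm hs)]
  congr 2
  have : Ioo (0 : ℝ) 1 • (((↑) : S2 → E3) '' (actS R ⁻¹' s)) =
      R.toMeasurableEquiv ⁻¹' (Ioo (0 : ℝ) 1 • (((↑) : S2 → E3) '' s)) := by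
    ext p
    constructor
    · rintro ⟨r, hr, _, ⟨u, hu, rfl⟩, rfl⟩
      exact ⟨r, hr, _, ⟨actS R u, hu, rfl⟩, by simp [actS]⟩
    · rintro ⟨r, hr, _, ⟨u, hu, rfl⟩, h⟩
      refine ⟨r, hr, _, ⟨actS R.symm u, ?_, rfl⟩, ?_⟩
      · have : actS R (actS R.symm u) = u := by ext1; simp [actS]
        simpa [this] using hu
      · apply R.injective
        simpa [actS] using h
  rw [this]
  have h2 : MeasurePreserving R.toMeasurableEquiv (volume : Measure E3) volume := R.measurePreserving
  exact h2.measure_preimage_equiv _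

lemma map_height (x : S2) (c : ℝ) (hc : 0 < c) :
    (sigma2.restrict {u : S2 | c ≤ inner ℝ (x : E3) (u : E3)}).map
      (fun u : S2 => (inner ℝ (x : E3) (u : E3) : ℝ)) =
    ENNReal.ofReal (1 / 2) • volume.restrict (Icc c 1) := by
  have hm : Measurable (fun u : S2 => (inner ℝ (x : E3) (u : E3) : ℝ)) := by fun_prop
  have := Measure.isFiniteMeasure_map (sigma2.restrict {u : S2 | c ≤ inner ℝ (x : E3) (u : E3)})
    (fun u : S2 => (inner ℝ (x : E3) (u : E3) : ℝ))
  apply Measure.ext_of_Ici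
  intro s
  rw [Measure.map_apply hm measurableSet_Ici, Measure.restrict_apply (hm measurableSet_Ici),
    Measure.smul_apply, Measure.restrict_apply measurableSet_Ici]
  have e1 : (fun u : S2 => (inner ℝ (x : E3) (u : E3) : ℝ)) ⁻¹' Ici s ∩
      {u : S2 | c ≤ inner ℝ (x : E3) (u : E3)} = {u : S2 | max s c ≤ inner ℝ (x : E3) (u : E3)} := by
    ext u; simp
  have e2 : Ici s ∩ Icc c 1 = Icc (max s c) 1 := by
    ext u; simp [and_assoc]
  rw [e1, e2, sigma_cap' _ _ (lt_max_of_lt_right hc), Real.volume_Icc, smul_eq_mul,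
    ← ENNReal.ofReal_mul (by norm_num)]
  congr 1; ring

lemma integral_height (x : S2) (c : ℝ) (hc : 0 < c) (hc1 : c ≤ 1) (g : ℝ → ℝ) (hg : Measurable g) :
    ∫ u in {u : S2 | c ≤ inner ℝ (x : E3) (u : E3)}, g (inner ℝ (x : E3) (u : E3)) ∂sigma2 =
    1 / 2 * ∫ t in c..1, g t := by
  have hm : Measurable (fun u : S2 => (inner ℝ (x : E3) (u : E3) : ℝ)) := by fun_prop
  rw [← integral_map (f := g) hm.aemeasurable hg.aestronglyMeasurable, map_height x c hc,
    integral_smul_measure, intervalIntegral.integral_of_le hc1, integral_Icc_eq_integral_Ioc,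
    ENNReal.toReal_ofReal (by norm_num), smul_eq_mul]

lemma integral_log_one_add (c : ℝ) :
    ∫ t in c..1, Real.log (1 + t) = 2 * Real.log 2 - (1 + c) * Real.log (1 + c) - (1 - c) := by
  rw [intervalIntegral.integral_comp_add_left (fun t => Real.log t), integral_log]
  norm_num
  ring

lemma inner_mem (x u : S2) : -1 ≤ (inner ℝ (x : E3) (u : E3) : ℝ) ∧ (inner ℝ (x : E3) (u : E3) : ℝ) ≤ 1 := by
  have hu1 : ‖(u : E3)‖ = 1 := by simp
  have hx1 : ‖(x : E3)‖ = 1 := by simp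
  have := abs_real_inner_le_norm (x : E3) (u : E3)
  rw [hu1, hx1, one_mul] at this
  exact abs_le.1 this

/-- Rotation of the sphere about the axis. -/
def rotS (L : E3 ≃ₗᵢ[ℝ] T3) (φ : ℝ) : S2 → S2 := actS ((L.trans (rotT φ)).trans L.symm)

lemma rotS_coe (L : E3 ≃ₗᵢ[ℝ] T3) (φ : ℝ) (u : S2) : (rotS L φ u : E3) = L.symm (rotT φ (L u)) := rfl

lemma rotS_inner {x : S2} {L : E3 ≃ₗᵢ[ℝ] T3} (hL : L (x : E3) = WithLp.toLp 2 (1, 0)) (φ : ℝ) (u : S2) :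
    (inner ℝ (x : E3) (rotS L φ u : E3) : ℝ) = inner ℝ (x : E3) (u : E3) := by
  rw [← coords_fst hL, ← coords_fst hL, rotS_coe]
  simp [rotT_apply]

lemma rotS_cont (L : E3 ≃ₗᵢ[ℝ] T3) : Continuous (fun q : ℝ × S2 => rotS L q.1 q.2) := by
  apply Continuous.subtype_mk
  change Continuous (fun q : ℝ × S2 => L.symm (rotT q.1 (L q.2)))
  apply L.symm.continuous.comp
  simp only [rotT_apply]
  apply (WithLp.prod_continuous_toLp 2 ℝ ℂ).comp
  have : Continuous (fun q : ℝ × S2 => (L q.2)) := by fun_prop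
  have h3 : Continuous (fun q : ℝ × S2 => WithLp.ofLp (L q.2)) :=
    (WithLp.prod_continuous_ofLp 2 ℝ ℂ).comp this
  have h4 : Continuous (fun q : ℝ × S2 => circleMap 0 1 q.1) := by
    unfold circleMap; fun_prop
  exact (continuous_fst.comp h3).prodMk (h4.mul (continuous_snd.comp h3))

lemma circle_log {x : S2} {L : E3 ≃ₗᵢ[ℝ] T3} (hL : L (x : E3) = WithLp.toLp 2 (1, 0)) (u v : S2)
    (h : (inner ℝ (x : E3) (v : E3) : ℝ) < inner ℝ (x : E3) (u : E3)) :
    ∫ φ in (0 : ℝ)..2 * π, Real.log (dist (rotS L φ u) v) =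
      2 * π * (1 / 2 * Real.log (1 + inner ℝ (x : E3) (u : E3)) +
        1 / 2 * Real.log (1 - inner ℝ (x : E3) (v : E3))) := by
  obtain ⟨hu1, hu2⟩ := inner_mem x u
  obtain ⟨hv1, hv2⟩ := inner_mem x v
  have hnu : (L u).fst ^ 2 + ‖(L u).snd‖ ^ 2 = 1 := by rw [← T3_norm_sq, L.norm_map]; simp
  have hnv : (L v).fst ^ 2 + ‖(L v).snd‖ ^ 2 = 1 := by rw [← T3_norm_sq, L.norm_map]; simp
  rw [coords_fst hL] at hnu hnv
  set t : ℝ := inner ℝ (x : E3) (u : E3) with ht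
  set s : ℝ := inner ℝ (x : E3) (v : E3) with hs
  set w := (L u).snd with hw
  set w' := (L v).snd with hw'
  set A : ℝ := (1 + t) * (1 - s) with hA
  have hApos : 0 < A := mul_pos (by linarith) (by linarith)
  set ζ : ℂ := w' * (starRingEnd ℂ) w / A with hζ
  have hζn : ‖ζ‖ ^ 2 * A ^ 2 = (1 - s ^ 2) * (1 - t ^ 2) := by
    rw [hζ, norm_div, norm_mul, RCLike.norm_conj, Complex.norm_real, norm_eq_abs, abs_of_pos hApos,
      div_pow, mul_pow, div_mul_cancel₀ _ (by positivity)]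
    rw [show 1 - s ^ 2 = ‖w'‖ ^ 2 by linarith, show 1 - t ^ 2 = ‖w‖ ^ 2 by linarith]
  have hζ1 : ‖ζ‖ < 1 := by
    rw [← sq_lt_one_iff₀ (norm_nonneg _)]
    have : ‖ζ‖ ^ 2 * A = (1 + s) * (1 - t) := by
      apply mul_right_cancel₀ hApos.ne'
      rw [mul_assoc, ← sq, hζn, hA]; ring
    have h2 : (1 + s) * (1 - t) < A := by rw [hA]; nlinarith
    by_contra hh
    nlinarith
  have hd : ∀ φ, dist (rotS L φ u) v = √A * ‖circleMap 0 1 φ - ζ‖ := by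
    intro φ
    rw [← sq_eq_sq₀ dist_nonneg (by positivity), mul_pow, Real.sq_sqrt hApos.le, Subtype.dist_eq,
      dist_eq_norm, rotS_coe, ← L.norm_map, map_sub, L.apply_symm_apply, T3_norm_sq]
    simp only [rotT_apply, WithLp.sub_fst, WithLp.sub_snd, coords_fst hL]
    rw [← ht, ← hs, ← hw, ← hw']
    set e := circleMap 0 1 φ with he
    have hen : ‖e‖ = 1 := by simp [he]
    have e1 : ‖e * w - w'‖ ^ 2 = ‖w‖ ^ 2 + ‖w'‖ ^ 2 - 2 * (e * w * (starRingEnd ℂ) w').re := by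
      rw [← Complex.normSq_eq_norm_sq, Complex.normSq_sub, Complex.normSq_eq_norm_sq,
        Complex.normSq_eq_norm_sq, norm_mul, hen, one_mul]
    have e2 : ‖e - ζ‖ ^ 2 = 1 + ‖ζ‖ ^ 2 - 2 * (e * (starRingEnd ℂ) ζ).re := by
      rw [← Complex.normSq_eq_norm_sq, Complex.normSq_sub, Complex.normSq_eq_norm_sq,
        Complex.normSq_eq_norm_sq, hen, one_pow]
    have e3 : A * (e * (starRingEnd ℂ) ζ).re = (e * w * (starRingEnd ℂ) w').re := by
      rw [← Complex.re_ofReal_mul]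
      congr 1
      have : (A : ℂ) ≠ 0 := by exact_mod_cast hApos.ne'
      rw [hζ, map_div₀, map_mul, Complex.conj_conj, Complex.conj_ofReal]
      field_simp
    have : ‖ζ‖ ^ 2 * A = (1 + s) * (1 - t) := by
      apply mul_right_cancel₀ hApos.ne'
      rw [mul_assoc, ← sq, hζn, hA]; ring
    change (t - s) ^ 2 + ‖e * w - w'‖ ^ 2 = _
    rw [e1, e2]
    have : A * (1 + ‖ζ‖ ^ 2 - 2 * (e * (starRingEnd ℂ) ζ).re) =
      A + ‖ζ‖ ^ 2 * A - 2 * (A * (e * (starRingEnd ℂ) ζ).re) := by ring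
    rw [this, e3]
    nlinarith
  have hne : ∀ φ, ‖circleMap 0 1 φ - ζ‖ ≠ 0 := by
    intro φ h0
    rw [norm_eq_zero, sub_eq_zero] at h0
    rw [← h0] at hζ1
    simp at hζ1
  have hca := circleAverage_log_norm_sub_const₀ hζ1
  rw [circleAverage_def, smul_eq_mul] at hca
  have hca' : ∫ φ in (0 : ℝ)..2 * π, Real.log ‖circleMap 0 1 φ - ζ‖ = 0 := by
    rcases mul_eq_zero.1 hca with h | h
    · have := pi_pos
      simp at h
    · exact h
  have hl : ∀ φ, Real.log (dist (rotS L φ u) v) = Real.log (√A) + Real.log ‖circleMap 0 1 φ - ζ‖ := by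
    intro φ
    rw [hd, Real.log_mul (by positivity) (hne φ)]
  simp_rw [hl]
  rw [intervalIntegral.integral_add (by simp), hca', Real.log_sqrt hApos.le, hA,
    Real.log_mul (by linarith) (by linarith)]
  · simp; ring
  · apply Continuous.intervalIntegrable
    exact Continuous.log (by unfold circleMap; fun_prop) hne

lemma continuous_dist_log (v : S2) (s : Set S2) (hv : v ∉ s) :
    ContinuousOn (fun u : S2 => Real.log (dist u v)) s := by
  apply ContinuousOn.log (by fun_prop)
  intro u hu h
  rw [dist_eq_zero] at h
  exact hv (h ▸ hu)

lemma potential (x v : S2) (c : ℝ) (hc : 0 < c) (hc1 : c ≤ 1) (hv : inner ℝ (x : E3) (v : E3) < c) :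
    ∫ u in {u : S2 | c ≤ inner ℝ (x : E3) (u : E3)}, Real.log (dist u v) ∂sigma2 =
    (1 - c) / 2 * (1 / 2 * Real.log (1 - inner ℝ (x : E3) (v : E3))) +
      1 / 4 * (2 * Real.log 2 - (1 + c) * Real.log (1 + c) - (1 - c)) := by
  obtain ⟨L, hL⟩ := exists_coords x
  set K := {u : S2 | c ≤ inner ℝ (x : E3) (u : E3)} with hK
  have hKm : MeasurableSet K := meas_cap' x c
  have hKc : IsClosed K := isClosed_le (by fun_prop) (by fun_prop)
  have hinv : ∀ φ, ∫ u in K, Real.log (dist (rotS L φ u) v) ∂sigma2 =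
      ∫ u in K, Real.log (dist u v) ∂sigma2 := by
    intro φ
    have hp : rotS L φ ⁻¹' K = K := by
      ext u
      simp only [hK, mem_preimage, mem_ofPred_eq, rotS_inner hL]
    have hmp : MeasurePreserving (rotS L φ) sigma2 sigma2 := actS_mp _
    have hmp' := hmp.restrict_preimage hKm
    rw [hp] at hmp'
    have hms : Measurable fun u : S2 => Real.log (dist u v) := by fun_prop
    have := integral_map (μ := sigma2.restrict K) hmp.measurable.aemeasurable
      (f := fun u : S2 => Real.log (dist u v)) hms.aestronglyMeasurable
    rw [hmp'.map_eq] at this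
    exact this.symm
  have hprodInt : Integrable (Function.uncurry fun (φ : ℝ) (u : S2) => Real.log (dist (rotS L φ u) v))
      ((volume.restrict (Ioc 0 (2 * π))).prod (sigma2.restrict K)) := by
    rw [Measure.prod_restrict]
    have hco : ContinuousOn (Function.uncurry fun (φ : ℝ) (u : S2) => Real.log (dist (rotS L φ u) v))
        (Icc 0 (2 * π) ×ˢ K) := by
      apply ContinuousOn.log
      · exact ((rotS_cont L).dist continuous_const).continuousOn
      · rintro ⟨φ, u⟩ ⟨_, hu⟩ h
        simp only [dist_eq_zero] at h
        have := rotS_inner hL φ u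
        rw [h] at this
        simp only [hK, mem_ofPred_eq] at hu
        linarith
    have := hco.integrableOn_compact (μ := (volume : Measure ℝ).prod sigma2)
      (isCompact_Icc.prod hKc.isCompact)
    exact this.mono_set (Set.prod_mono Ioc_subset_Icc_self subset_rfl)
  have h1 : 2 * π * ∫ u in K, Real.log (dist u v) ∂sigma2 =
      ∫ φ in (0 : ℝ)..2 * π, ∫ u in K, Real.log (dist (rotS L φ u) v) ∂sigma2 := by
    simp_rw [hinv]; simp
  rw [intervalIntegral.integral_of_le (by positivity), integral_integral_swap hprodInt] at h1
  have h2 : ∫ u in K, (∫ φ in Ioc 0 (2 * π), Real.log (dist (rotS L φ u) v)) ∂sigma2 =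
      ∫ u in K, 2 * π * (1 / 2 * Real.log (1 + inner ℝ (x : E3) (u : E3)) +
        1 / 2 * Real.log (1 - inner ℝ (x : E3) (v : E3))) ∂sigma2 := by
    apply setIntegral_congr_fun hKm
    intro u hu
    simp only
    rw [← intervalIntegral.integral_of_le (by positivity), circle_log hL u v (lt_of_lt_of_le hv hu)]
  rw [h2, hK, integral_height x c hc hc1 (fun t => 2 * π * (1 / 2 * Real.log (1 + t) +
        1 / 2 * Real.log (1 - inner ℝ (x : E3) (v : E3)))) (by fun_prop),
    intervalIntegral.integral_const_mul, intervalIntegral.integral_add,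
    intervalIntegral.integral_const_mul, integral_log_one_add c] at h1
  · have hpi : (2 * π) ≠ 0 := by positivity
    apply mul_left_cancel₀ hpi
    rw [h1]
    simp
    ring
  · apply ContinuousOn.intervalIntegrable
    apply ContinuousOn.mul (by fun_prop)
    apply ContinuousOn.log (by fun_prop)
    intro t ht
    rw [uIcc_of_le hc1] at ht
    linarith [ht.1]
  · simp

lemma cap_eq_s6 (x : S2) (a : ℝ) (ha : a ∈ Set.Ioo 0 (π/2)) :
    cap x a = {u : S2 | Real.cos a ≤ inner ℝ (x : E3) (u : E3)} := by
  ext u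
  obtain ⟨h1, h2⟩ := inner_mem x u
  have hpi := pi_pos
  change Real.arccos _ ≤ a ↔ Real.cos a ≤ _
  conv_lhs => rw [← Real.arccos_cos ha.1.le (by linarith [ha.2])]
  exact Real.strictAntiOn_arccos.le_iff_ge ⟨h1, h2⟩ ⟨Real.neg_one_le_cos a, Real.cos_le_one a⟩

lemma log_dist (x v : S2) (h : (inner ℝ (x : E3) (v : E3) : ℝ) < 1) :
    Real.log (dist x v) = 1 / 2 * Real.log 2 + 1 / 2 * Real.log (1 - inner ℝ (x : E3) (v : E3)) := by
  have hd : dist x v ^ 2 = 2 * (1 - inner ℝ (x : E3) (v : E3)) := by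
    rw [Subtype.dist_eq, dist_eq_norm, norm_sub_sq_real]
    simp; ring
  have h2 := congrArg Real.log hd
  rw [Real.log_pow, Real.log_mul (by norm_num) (by linarith)] at h2
  push_cast at h2
  linarith

lemma potential' (a : ℝ) (ha : a ∈ Set.Ioo 0 (π/2)) (x v : S2) (hv : v ∉ cap x a) :
    ∫ u in cap x a, Real.log (1 / dist u v) ∂sigma2 =
    (1 - Real.cos a) / 2 * (Real.log (1 / dist x v) +
      (1 / 2 + Real.cot (a/2) ^ 2 * Real.log (Real.cos (a/2)))) := by
  rw [cap_eq_s6 x a ha] at hv ⊢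
  have hc : 0 < Real.cos a := Real.cos_pos_of_mem_Ioo ⟨by linarith [ha.1, ha.2], ha.2⟩
  have hv' : (inner ℝ (x : E3) (v : E3) : ℝ) < Real.cos a := not_le.1 hv
  have hc1 := Real.cos_le_one a
  have hcc : 0 < Real.cos (a / 2) := Real.cos_pos_of_mem_Ioo ⟨by linarith [ha.1, ha.2], by linarith [ha.1, ha.2]⟩
  have hss : 0 < Real.sin (a / 2) := Real.sin_pos_of_pos_of_lt_pi (by linarith [ha.1]) (by linarith [ha.1, ha.2])
  simp only [one_div, Real.log_inv]
  rw [integral_neg, potential x v _ hc hc1 hv', log_dist x v (by linarith)]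
  have e1 : Real.cos a = 2 * Real.cos (a / 2) ^ 2 - 1 := by
    rw [← Real.cos_two_mul]; congr 1; ring
  have e2 : Real.cos (a / 2) ^ 2 = 1 - Real.sin (a / 2) ^ 2 := by
    linarith [Real.sin_sq_add_cos_sq (a / 2)]
  have e3 : Real.log (1 + Real.cos a) = Real.log 2 + 2 * Real.log (Real.cos (a / 2)) := by
    rw [e1, show 1 + (2 * Real.cos (a / 2) ^ 2 - 1) = 2 * Real.cos (a / 2) ^ 2 by ring,
      Real.log_mul (by norm_num) (by positivity), Real.log_pow]
    push_cast; rfl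
  have e4 : (1 - Real.cos a) / 2 * Real.cot (a / 2) ^ 2 = (1 + Real.cos a) / 2 := by
    rw [Real.cot_eq_cos_div_sin, div_pow, show (1 - Real.cos a) / 2 = Real.sin (a / 2) ^ 2 by
      rw [e1, e2]; ring, e1]
    field_simp; ring
  rw [e3]
  linear_combination -(Real.log (Real.cos (a / 2))) * e4

/-- For disjoint spherical caps of geodesic radius `a ∈ (0, π/2)`, the mutual energy
of the normalized uniform measures equals `log(1/|x−y|) + 1 + 2 cot²(a/2) log cos(a/2)`. -/
theorem cap_mutual_energy_eq (a : ℝ) (ha : a ∈ Set.Ioo 0 (π/2)) (x y : S2)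
    (hdisj : Disjoint (cap x a) (cap y a)) :
    ((sigma2 (cap x a)).toReal ^ 2)⁻¹ *
      ∫ u in cap x a, ∫ v in cap y a, Real.log (1 / dist u v) ∂sigma2 ∂sigma2 =
    Real.log (1 / dist x y) + 1 + 2 * Real.cot (a/2) ^ 2 * Real.log (Real.cos (a/2)) := by
  have hpi := pi_pos
  have hc : 0 < Real.cos a := Real.cos_pos_of_mem_Ioo ⟨by linarith [ha.1, ha.2], ha.2⟩
  have hc1 : Real.cos a < 1 := by
    rw [← Real.cos_zero]
    exact Real.cos_lt_cos_of_nonneg_of_le_pi le_rfl (by linarith [ha.2]) ha.1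
  have hσ : ∀ z : S2, (sigma2 (cap z a)).toReal = (1 - Real.cos a) / 2 := by
    intro z
    rw [cap_eq_s6 z a ha, sigma_cap' _ _ hc, ENNReal.toReal_ofReal (by linarith)]
  have hmem : y ∈ cap y a := by
    rw [cap_eq_s6 y a ha]
    simp [hc1.le]
  have hmeas : MeasurableSet (cap x a) := by rw [cap_eq_s6 x a ha]; exact meas_cap' _ _
  have hyx : y ∉ cap x a := fun h => Set.disjoint_left.1 hdisj h hmem
  have h1 : ∫ u in cap x a, ∫ v in cap y a, Real.log (1 / dist u v) ∂sigma2 ∂sigma2 =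
      ∫ u in cap x a, (1 - Real.cos a) / 2 * (Real.log (1 / dist u y) +
      (1 / 2 + Real.cot (a/2) ^ 2 * Real.log (Real.cos (a/2)))) ∂sigma2 := by
    apply setIntegral_congr_fun hmeas
    intro u hu
    have := potential' a ha y u (Set.disjoint_left.1 hdisj hu)
    simp only [dist_comm _ u] at this
    exact this
  have hi : IntegrableOn (fun u : S2 => Real.log (1 / dist u y)) (cap x a) sigma2 := by
    simp only [one_div, Real.log_inv]
    have hcl : IsClosed (cap x a) := by
      rw [cap_eq_s6 x a ha]; exact isClosed_le (by fun_prop) (by fun_prop)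
    exact ((continuous_dist_log y _ hyx).integrableOn_compact hcl.isCompact).neg
  rw [h1, integral_const_mul, integral_add hi (integrable_const _), potential' a ha x y hyx, hσ]
  simp only [integral_const, Measure.real, Measure.restrict_apply_univ, hσ, smul_eq_mul]
  have : 1 - Real.cos a ≠ 0 := by linarith
  field_simp
  ring
end
end
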